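/- arXiv:cs/0512013 — 7 statements merged into one kernel-verified Lean document; each statement's English description precedes it below -/
import Mathlib

section
/- Fix positive reals h₁, h₂, σ², λ₁, λ₂. Define P₁ = (λ₁ − σ²/h₁)⁺ if λ₁h₁ ≥ λ₂h₂ and P₁ = 0 otherwise, and P₂ = (λ₂ − σ²/h₂)⁺ if λ₂h₂ > λ₁h₁ and P₂ = 0 otherwise. Then P₁ = (λ₁ − σ²/h₁ − P₂h₂/h₁)⁺ and P₂ = (λ₂ − σ²/h₂ − P₁h₁/h₂)⁺; that is, at every channel state the time-sharing power allocations are mutual water-filling best responses. -/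
/-!
A water-filling response vanishes exactly when the noise plus interference reaches the product of
water level and gain. The user with the larger product, transmitting alone, raises noise plus
received power to at least its own product, hence to at least that of the other user: the other user
stays silent, and so the first one indeed sees only the noise.
-/

section WaterFilling

variable {K : Type*} [Field K] [LinearOrder K]

/-- The water-filling power `(l - n / a)⁺` of a user with water level `l` and channel gain `a`.
The disturbance `n` is the noise variance plus the interference power `P * b` received from the
other user, measured before division by the user's own gain. -/
def waterFilling (l a n : K) : K :=
  max (l - n / a) 0

lemma waterFilling_add (l a s q : K) :
    waterFilling l a (s + q) = max (l - s / a - q / a) 0 := by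
  rw [waterFilling, add_div, sub_add_eq_sub_sub]

variable [IsStrictOrderedRing K] {a b l m n s : K}

lemma waterFilling_eq_zero_iff (ha : 0 < a) : waterFilling l a n = 0 ↔ l * a ≤ n := by
  rw [waterFilling, max_eq_right_iff, sub_nonpos, le_div_iff₀ ha]

lemma mul_le_add_waterFilling_mul (ha : 0 < a) : l * a ≤ n + waterFilling l a n * a :=
  calc
    l * a = n + (l - n / a) * a := by field_simp; ring
    _ ≤ n + waterFilling l a n * a := by gcongr; exact le_max_left _ _

lemma waterFilling_add_waterFilling_mul_eq_zero (ha : 0 < a) (hb : 0 < b)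
    (h : m * b ≤ l * a) : waterFilling m b (s + waterFilling l a s * a) = 0 :=
  (waterFilling_eq_zero_iff hb).2 (h.trans (mul_le_add_waterFilling_mul ha))

theorem stmt_0_general {h₁ h₂ σ2 lam₁ lam₂ P₁ P₂ : K} (hh₁ : 0 < h₁) (hh₂ : 0 < h₂)
    (hP₁ : P₁ = if lam₂ * h₂ ≤ lam₁ * h₁ then max (lam₁ - σ2 / h₁) 0 else 0)
    (hP₂ : P₂ = if lam₁ * h₁ < lam₂ * h₂ then max (lam₂ - σ2 / h₂) 0 else 0) :
    P₁ = max (lam₁ - σ2 / h₁ - P₂ * h₂ / h₁) 0 ∧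
    P₂ = max (lam₂ - σ2 / h₂ - P₁ * h₁ / h₂) 0 := by
  change P₁ = if _ then waterFilling lam₁ h₁ σ2 else 0 at hP₁
  change P₂ = if _ then waterFilling lam₂ h₂ σ2 else 0 at hP₂
  simp only [← waterFilling_add]
  rcases le_or_gt (lam₂ * h₂) (lam₁ * h₁) with h | h
  · rw [if_pos h] at hP₁
    rw [if_neg h.not_gt] at hP₂
    subst hP₁ hP₂
    exact ⟨by rw [zero_mul, add_zero],
      (waterFilling_add_waterFilling_mul_eq_zero hh₁ hh₂ h).symm⟩
  · rw [if_neg h.not_ge] at hP₁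
    rw [if_pos h] at hP₂
    subst hP₁ hP₂
    exact ⟨(waterFilling_add_waterFilling_mul_eq_zero hh₂ hh₁ h.le).symm,
      by rw [zero_mul, add_zero]⟩

end WaterFilling

/-- At every channel state, the time-sharing power allocations (where only the user
with the larger `lamᵢ * hᵢ` transmits, water-filling over the background noise)
are mutual water-filling best responses. -/
theorem stmt_0 (h₁ h₂ σ2 lam₁ lam₂ P₁ P₂ : ℝ)
    (hh₁ : 0 < h₁) (hh₂ : 0 < h₂) (hσ : 0 < σ2) (hlam₁ : 0 < lam₁) (hlam₂ : 0 < lam₂)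
    (hP₁ : P₁ = if lam₂ * h₂ ≤ lam₁ * h₁ then max (lam₁ - σ2 / h₁) 0 else 0)
    (hP₂ : P₂ = if lam₁ * h₁ < lam₂ * h₂ then max (lam₂ - σ2 / h₂) 0 else 0) :
    P₁ = max (lam₁ - σ2 / h₁ - P₂ * h₂ / h₁) 0 ∧
    P₂ = max (lam₂ - σ2 / h₂ - P₁ * h₁ / h₂) 0 :=
  stmt_0_general hh₁ hh₂ hP₁ hP₂
end

section
/- Let N ≥ 1 and let h, λ : Fin N → ℝ be strictly positive, σ² > 0, and let i* be an index such that λⱼhⱼ ≤ λᵢ*hᵢ* for all j. Define P : Fin N → ℝ by Pᵢ* = (λᵢ* − σ²/hᵢ*)⁺ and Pⱼ = 0 for j ≠ i*. Then for every i one has Pᵢ = (λᵢ − (σ² + Σ_{j≠i} hⱼPⱼ)/hᵢ)⁺; that is, the opportunistic allocation in which only the user with the largest λᵢhᵢ transmits is a simultaneous water-filling fixed point for all N users. -/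
/-!
The best user `k` receives no interference, so its best response is the power it already uses.
By water-filling, `k` raises noise plus its own signal to at least `lam k * h k`. Every other user
`i` sees exactly this sum as noise plus interference, and it reaches `lam i * h i` because `k`
maximizes `lam * h`; hence `i` stays silent.
-/

section WaterFilling

variable {K : Type*} [Field K] [LinearOrder K]

/-- The water-filling power `(level - noise / gain)⁺` of a transmitter with water level `level` on
a channel with gain `gain`, where `noise` is the total noise and interference power. -/
def waterFill (level gain noise : K) : K :=
  max (level - noise / gain) 0

theorem waterFill_eq_zero_iff [IsStrictOrderedRing K] {level gain noise : K} (hgain : 0 < gain) :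
    waterFill level gain noise = 0 ↔ level * gain ≤ noise := by
  rw [waterFill, max_eq_right_iff, sub_nonpos, le_div_iff₀ hgain]

theorem level_mul_gain_le_noise_add_gain_mul_waterFill [IsStrictOrderedRing K]
    {level gain : K} (hgain : 0 < gain) (noise : K) :
    level * gain ≤ noise + gain * waterFill level gain noise :=
  calc
    level * gain = noise + gain * (level - noise / gain) := by
      rw [mul_sub, mul_div_cancel₀ noise hgain.ne', add_sub_cancel, mul_comm]
    _ ≤ noise + gain * waterFill level gain noise := by
      gcongr
      exact le_max_left _ _

end WaterFilling

section Interference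

variable {ι R : Type*} [Fintype ι] [DecidableEq ι] [NonUnitalNonAssocSemiring R]

/-- The interference power seen by user `i` when user `j`, with channel gain `h j`, transmits with
power `P j`. -/
def interference (h P : ι → R) (i : ι) : R :=
  ∑ j ∈ Finset.univ.erase i, h j * P j

theorem interference_single_self (h : ι → R) (i : ι) (p : R) :
    interference h (Pi.single i p) i = 0 :=
  Finset.sum_eq_zero fun j hj => by
    rw [Pi.single_eq_of_ne (Finset.ne_of_mem_erase hj), mul_zero]

theorem interference_single_of_ne (h : ι → R) {i k : ι} (hik : i ≠ k) (p : R) :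
    interference h (Pi.single k p) i = h k * p := by
  simp [interference, Pi.single_apply, hik.symm]

end Interference

section Game

variable {ι K : Type*} [DecidableEq ι] [Field K] [LinearOrder K]

/-- The simultaneous best-response map of the water-filling game with channel gains `h`, water
levels `lam` and noise variance `σ2`; its fixed points are the water-filling equilibria. -/
def waterFillingResponse [Fintype ι] (h lam : ι → K) (σ2 : K) (P : ι → K) : ι → K :=
  fun i => waterFill (lam i) (h i) (σ2 + interference h P i)

/-- The opportunistic power allocation: only user `k` transmits, water-filling over the
background noise. -/
def opportunisticAllocation (h lam : ι → K) (σ2 : K) (k : ι) : ι → K :=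
  Pi.single k (waterFill (lam k) (h k) σ2)

variable [Fintype ι]

theorem waterFillingResponse_opportunisticAllocation_self (h lam : ι → K) (σ2 : K) (k : ι) :
    waterFillingResponse h lam σ2 (opportunisticAllocation h lam σ2 k) k =
      waterFill (lam k) (h k) σ2 := by
  rw [waterFillingResponse, opportunisticAllocation, interference_single_self, add_zero]

theorem waterFillingResponse_opportunisticAllocation_of_ne [IsStrictOrderedRing K]
    {h lam : ι → K} (σ2 : K) {i k : ι} (hik : i ≠ k) (hi : 0 < h i) (hk : 0 < h k)
    (hle : lam i * h i ≤ lam k * h k) :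
    waterFillingResponse h lam σ2 (opportunisticAllocation h lam σ2 k) i = 0 := by
  rw [waterFillingResponse, waterFill_eq_zero_iff hi, opportunisticAllocation,
    interference_single_of_ne h hik]
  exact hle.trans (level_mul_gain_le_noise_add_gain_mul_waterFill hk σ2)

theorem stmt_1_general [IsStrictOrderedRing K] {h lam : ι → K} (σ2 : K) (hh : ∀ i, 0 < h i)
    {k : ι} (hk : ∀ j, lam j * h j ≤ lam k * h k) :
    Function.IsFixedPt (waterFillingResponse h lam σ2) (opportunisticAllocation h lam σ2 k) := by
  funext i
  obtain rfl | hik := eq_or_ne i k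
  · rw [waterFillingResponse_opportunisticAllocation_self, opportunisticAllocation,
      Pi.single_eq_same]
  · rw [waterFillingResponse_opportunisticAllocation_of_ne σ2 hik (hh i) (hh k) (hk i),
      opportunisticAllocation, Pi.single_eq_of_ne hik]

end Game

open Finset in
/-- The opportunistic allocation, in which only the user with the largest
`lam i * h i` transmits (water-filling over the background noise), is a
simultaneous water-filling fixed point for all `N` users. -/
theorem stmt_1 (N : ℕ) (hN : 1 ≤ N) (h lam : Fin N → ℝ) (σ2 : ℝ)
    (hh : ∀ i, 0 < h i) (hlam : ∀ i, 0 < lam i) (hσ : 0 < σ2)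
    (istar : Fin N) (hstar : ∀ j, lam j * h j ≤ lam istar * h istar)
    (P : Fin N → ℝ)
    (hP : P = fun i => if i = istar then max (lam istar - σ2 / h istar) 0 else 0) :
    ∀ i, P i = max (lam i - (σ2 + ∑ j ∈ univ.erase i, h j * P j) / h i) 0 := by
  obtain rfl : P = opportunisticAllocation h lam σ2 istar :=
    hP.trans (funext fun i => (Pi.single_apply istar _ i).symm)
  exact fun i => (congrFun (stmt_1_general σ2 hh hstar) i).symm
end

section
/- Let N ≥ 1, let h : Fin N → ℝ be strictly positive, let λ, P : Fin N → ℝ, and let σ² > 0. Suppose that for every index i with Pᵢ > 0 the water-filling equation Pᵢ + (σ² + Σ_{j≠i} hⱼPⱼ)/hᵢ = λᵢ holds, where the sum ranges over all j ≠ i. Then for any two indices i, j with Pᵢ > 0 and Pⱼ > 0 one has λᵢhᵢ = λⱼhⱼ. -/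
section WaterFilling

variable {ι K : Type*} [DecidableEq ι] [Semifield K] {s : Finset ι} {i j : ι} {h : ι → K}

-- User `i`'s own received power `h i * P i` fills the gap in the interference sum, leaving a
-- quantity that is the same for every user.
theorem water_level_mul_gain_eq_noise_add_sum (P : ι → K) (σ2 : K) (hi : i ∈ s) (hhi : h i ≠ 0) :
    (P i + (σ2 + ∑ k ∈ s.erase i, h k * P k) / h i) * h i = σ2 + ∑ k ∈ s, h k * P k :=
  calc
    (P i + (σ2 + ∑ k ∈ s.erase i, h k * P k) / h i) * h i
        = P i * h i + (σ2 + ∑ k ∈ s.erase i, h k * P k) := by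
      rw [add_mul, div_mul_cancel₀ _ hhi]
    _ = σ2 + (h i * P i + ∑ k ∈ s.erase i, h k * P k) := by ring
    _ = σ2 + ∑ k ∈ s, h k * P k := by
      rw [Finset.add_sum_erase s (fun k => h k * P k) hi]

theorem stmt_2_general {lam P : ι → K} {σ2 : K} (hi : i ∈ s) (hj : j ∈ s)
    (hhi : h i ≠ 0) (hhj : h j ≠ 0)
    (hwfi : P i + (σ2 + ∑ k ∈ s.erase i, h k * P k) / h i = lam i)
    (hwfj : P j + (σ2 + ∑ k ∈ s.erase j, h k * P k) / h j = lam j) :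
    lam i * h i = lam j * h j := by
  rw [← hwfi, ← hwfj, water_level_mul_gain_eq_noise_add_sum P σ2 hi hhi,
    water_level_mul_gain_eq_noise_add_sum P σ2 hj hhj]

end WaterFilling

open Finset in
/-- At a Nash equilibrium of the water-filling game, simultaneous transmission by
two users forces the degenerate condition `lam i * h i = lam j * h j`. -/
theorem stmt_2 (N : ℕ) (hN : 1 ≤ N) (h : Fin N → ℝ) (lam P : Fin N → ℝ) (σ2 : ℝ)
    (hh : ∀ i, 0 < h i) (hσ : 0 < σ2)
    (hwf : ∀ i, 0 < P i →
      P i + (σ2 + ∑ j ∈ univ.erase i, h j * P j) / h i = lam i) :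
    ∀ i j, 0 < P i → 0 < P j → lam i * h i = lam j * h j :=
  fun i j hi hj => stmt_2_general (mem_univ i) (mem_univ j) (hh i).ne' (hh j).ne'
    (hwf i hi) (hwf j hj)
end

section
/- Let (Ω, μ) be a measure space, let g : Ω → ℝ be measurable with g > 0 μ-almost everywhere, and let λ > 0. Define the water-filling policy P*(ω) = (λ − 1/g(ω))⁺, and assume P* and ω ↦ log(1 + P*(ω)g(ω)) are μ-integrable; set P̄ = ∫ P* dμ. Then for every measurable P : Ω → ℝ with P ≥ 0 μ-a.e., ∫ P dμ ≤ P̄, and ω ↦ log(1 + P(ω)g(ω)) μ-integrable, one has ∫ log(1 + P g) dμ ≤ ∫ log(1 + P* g) dμ. -/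
open MeasureTheory

/-!
Lagrangian duality with multiplier `lam⁻¹`: in each state the water-filling power satisfies the
Karush–Kuhn–Tucker conditions for maximizing `p ↦ log (1 + p * g) - lam⁻¹ * p` over `p ≥ 0`, hence
is a maximizer by concavity. Integrating this pointwise comparison leaves the error term
`lam⁻¹ * (∫ P - ∫ Pstar)`, which is nonpositive by the power budget.
-/

/-- The water-filling power at water level `lam` over a channel of gain `g`: the power that fills a
vessel with floor `1 / g` up to level `lam`. Meaningful for `0 < g`; at `g = 0` division yields
the junk floor `0` instead of an infinite one. -/
noncomputable def waterFillingPower (lam g : ℝ) : ℝ :=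
  max (lam - 1 / g) 0

section SingleState

variable {lam g p q : ℝ}

lemma waterFillingPower_nonneg : 0 ≤ waterFillingPower lam g :=
  le_max_right _ _

lemma one_add_waterFillingPower_mul (hg : 0 < g) :
    1 + waterFillingPower lam g * g = max (lam * g) 1 := by
  rw [waterFillingPower, max_mul_of_nonneg _ _ hg.le, sub_mul, one_div_mul_cancel hg.ne', zero_mul,
    ← max_add_add_left, add_sub_cancel, add_zero]

lemma log_one_add_mul_le_add_tangent (hp : 0 < 1 + p * g) (hq : 0 < 1 + q * g) :
    Real.log (1 + p * g) ≤ Real.log (1 + q * g) + g / (1 + q * g) * (p - q) := by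
  have log_ratio_le := Real.log_le_sub_one_of_pos (div_pos hp hq)
  rw [Real.log_div hp.ne' hq.ne'] at log_ratio_le
  have ratio_sub_one : (1 + p * g) / (1 + q * g) - 1 = g / (1 + q * g) * (p - q) := by
    rw [div_sub_one hq.ne']
    ring
  linarith

/- A single inequality for both cases of the Karush–Kuhn–Tucker conditions: the marginal rate equals
`lam⁻¹` at a positive water-filling power and is at most `lam⁻¹` at power `0`. -/
lemma marginal_rate_waterFillingPower_mul_sub_le (hg : 0 < g) (hlam : 0 < lam) (hp : 0 ≤ p) :
    g / (1 + waterFillingPower lam g * g) * (p - waterFillingPower lam g) ≤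
      lam⁻¹ * (p - waterFillingPower lam g) := by
  rw [one_add_waterFillingPower_mul hg]
  rcases le_total lam (1 / g) with floor_above | floor_below
  · have power_eq_zero : waterFillingPower lam g = 0 := max_eq_right (sub_nonpos.2 floor_above)
    have gain_le : g ≤ lam⁻¹ := by simpa only [one_div] using (le_one_div hlam hg).1 floor_above
    rw [max_eq_right ((le_div_iff₀ hg).1 floor_above), div_one, power_eq_zero, sub_zero]
    exact mul_le_mul_of_nonneg_right gain_le hp
  · rw [max_eq_left ((div_le_iff₀ hg).1 floor_below), div_mul_cancel_right₀ hg.ne']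

lemma isMaxOn_waterFillingPower (hg : 0 < g) (hlam : 0 < lam) :
    IsMaxOn (fun p => Real.log (1 + p * g) - lam⁻¹ * p) (Set.Ici 0) (waterFillingPower lam g) := by
  refine isMaxOn_iff.2 fun p (hp : 0 ≤ p) => ?_
  have tangent_bound := log_one_add_mul_le_add_tangent (g := g) (p := p)
    (q := waterFillingPower lam g) (by positivity)
    (add_pos_of_pos_of_nonneg one_pos (mul_nonneg waterFillingPower_nonneg hg.le))
  linarith [marginal_rate_waterFillingPower_mul_sub_le hg hlam hp]

end SingleState

lemma integral_le_integral_of_ae_isMaxOn_lagrangian {Ω E : Type*} [MeasurableSpace Ω]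
    {μ : Measure Ω} {reward cost : Ω → E → ℝ} {S : Ω → Set E} {c : ℝ} {x y : Ω → E} (hc : 0 ≤ c)
    (hmax : ∀ᵐ ω ∂μ, IsMaxOn (fun a => reward ω a - c * cost ω a) (S ω) (y ω))
    (hx : ∀ᵐ ω ∂μ, x ω ∈ S ω)
    (hrx : Integrable (fun ω => reward ω (x ω)) μ) (hcx : Integrable (fun ω => cost ω (x ω)) μ)
    (hry : Integrable (fun ω => reward ω (y ω)) μ) (hcy : Integrable (fun ω => cost ω (y ω)) μ)
    (hcost : ∫ ω, cost ω (x ω) ∂μ ≤ ∫ ω, cost ω (y ω) ∂μ) :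
    ∫ ω, reward ω (x ω) ∂μ ≤ ∫ ω, reward ω (y ω) ∂μ := by
  have lagrangian_le : ∫ ω, (reward ω (x ω) - c * cost ω (x ω)) ∂μ ≤
      ∫ ω, (reward ω (y ω) - c * cost ω (y ω)) ∂μ := by
    refine integral_mono_ae (hrx.sub (hcx.const_mul c)) (hry.sub (hcy.const_mul c)) ?_
    filter_upwards [hmax, hx] with ω hω hxω using isMaxOn_iff.1 hω _ hxω
  rw [integral_sub hrx (hcx.const_mul c), integral_sub hry (hcy.const_mul c),
    integral_const_mul, integral_const_mul] at lagrangian_le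
  linarith [mul_le_mul_of_nonneg_left hcost hc]

/-- Water-filling maximizes the average achievable rate subject to an average power
constraint. -/
theorem stmt_5 {Ω : Type*} [MeasurableSpace Ω] (μ : Measure Ω)
    (g : Ω → ℝ) (hg : Measurable g) (hgpos : ∀ᵐ ω ∂μ, 0 < g ω)
    (lam : ℝ) (hlam : 0 < lam)
    (Pstar : Ω → ℝ) (hPstar : Pstar = fun ω => max (lam - 1 / g ω) 0)
    (hPstarInt : Integrable Pstar μ)
    (hRstarInt : Integrable (fun ω => Real.log (1 + Pstar ω * g ω)) μ)
    (Pbar : ℝ) (hPbar : Pbar = ∫ ω, Pstar ω ∂μ) :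
    ∀ P : Ω → ℝ, Measurable P → (∀ᵐ ω ∂μ, 0 ≤ P ω) →
      Integrable P μ → (∫ ω, P ω ∂μ) ≤ Pbar →
      Integrable (fun ω => Real.log (1 + P ω * g ω)) μ →
      (∫ ω, Real.log (1 + P ω * g ω) ∂μ) ≤ ∫ ω, Real.log (1 + Pstar ω * g ω) ∂μ := by
  intro P _ hP hPInt hbudget hRInt
  subst hPbar hPstar
  have hmax : ∀ᵐ ω ∂μ, IsMaxOn (fun p => Real.log (1 + p * g ω) - lam⁻¹ * p) (Set.Ici 0)
      (waterFillingPower lam (g ω)) := by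
    filter_upwards [hgpos] with ω hgω using isMaxOn_waterFillingPower hgω hlam
  exact integral_le_integral_of_ae_isMaxOn_lagrangian
    (reward := fun ω p => Real.log (1 + p * g ω)) (cost := fun _ p => p)
    (inv_nonneg.2 hlam.le) hmax hP hRInt hPInt hRstarInt hPstarInt hbudget
end

section
/- Let μ be a probability measure on ℝ² (coordinates (h₁,h₂)) that is absolutely continuous with respect to Lebesgue measure and satisfies h₁ > 0 and h₂ > 0 μ-almost everywhere. Fix σ² > 0 and λ₁, λ₂ > 0, and let P₁, P₂ : ℝ² → ℝ be measurable functions such that μ-almost everywhere P₁ = (λ₁ − σ²/h₁ − P₂h₂/h₁)⁺ and P₂ = (λ₂ − σ²/h₂ − P₁h₁/h₂)⁺. Then μ({ (h₁,h₂) : P₁(h₁,h₂) > 0 and P₂(h₁,h₂) > 0 }) = 0; that is, any such mutual water-filling pair is a time-sharing allocation. -/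
open MeasureTheory

/-!
Where both users transmit, neither positive part is truncated, so clearing denominators in the two
water-filling equations expresses `lam₁ * h₁` and `lam₂ * h₂` as the same total received power
`σ2 + P₁ h₁ + P₂ h₂`. Hence simultaneous transmission is confined to the line
`lam₁ * h₁ = lam₂ * h₂`, which is Lebesgue-null.
-/

theorem ae_linearMap_ne_zero {E F : Type*} [NormedAddCommGroup E] [NormedSpace ℝ E]
    [FiniteDimensional ℝ E] [MeasurableSpace E] [BorelSpace E] [AddCommGroup F] [Module ℝ F]
    (μ : Measure E) [μ.IsAddHaarMeasure] {f : E →ₗ[ℝ] F} (hf : f ≠ 0) :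
    ∀ᵐ x ∂μ, f x ≠ 0 :=
  measure_eq_zero_iff_ae_notMem.1 <|
    Measure.addHaar_submodule μ (LinearMap.ker f) (LinearMap.ker_eq_top.not.2 hf)

theorem ae_mul_fst_ne_mul_snd {a b : ℝ} (hab : a ≠ 0 ∨ b ≠ 0) :
    ∀ᵐ x : ℝ × ℝ, a * x.1 ≠ b * x.2 := by
  let f : ℝ × ℝ →ₗ[ℝ] ℝ := a • LinearMap.fst ℝ ℝ ℝ - b • LinearMap.snd ℝ ℝ ℝ
  have hf : f ≠ 0 := by
    intro h
    have ha : a = 0 := by simpa [f] using LinearMap.congr_fun h (1, 0)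
    have hb : b = 0 := by simpa [f] using LinearMap.congr_fun h (0, 1)
    exact hab.elim (· ha) (· hb)
  filter_upwards [ae_linearMap_ne_zero volume hf] with x hx
  exact sub_ne_zero.1 hx

section WaterFilling

variable {𝕜 : Type*} [Field 𝕜] [LinearOrder 𝕜]

theorem level_mul_gain_eq_of_power_pos {level noise interference gain power : 𝕜}
    (hgain : gain ≠ 0) (hpower : 0 < power)
    (hwf : power = max (level - noise / gain - interference / gain) 0) :
    level * gain = noise + interference + power * gain := by
  have huntruncated : 0 < level - noise / gain - interference / gain := by
    simpa only [hwf, lt_max_iff, lt_irrefl, or_false] using hpower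
  rw [hwf, max_eq_left huntruncated.le]
  field_simp
  ring

theorem level_mul_gain_eq_level_mul_gain {lam₁ lam₂ noise g₁ g₂ p₁ p₂ : 𝕜}
    (hg₁ : g₁ ≠ 0) (hg₂ : g₂ ≠ 0) (hp₁ : 0 < p₁) (hp₂ : 0 < p₂)
    (hwf₁ : p₁ = max (lam₁ - noise / g₁ - p₂ * g₂ / g₁) 0)
    (hwf₂ : p₂ = max (lam₂ - noise / g₂ - p₁ * g₁ / g₂) 0) :
    lam₁ * g₁ = lam₂ * g₂ :=
  calc
    lam₁ * g₁ = noise + p₂ * g₂ + p₁ * g₁ := level_mul_gain_eq_of_power_pos hg₁ hp₁ hwf₁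
    _ = noise + p₁ * g₁ + p₂ * g₂ := add_right_comm _ _ _
    _ = lam₂ * g₂ := (level_mul_gain_eq_of_power_pos hg₂ hp₂ hwf₂).symm

end WaterFilling

/-- Since `noise` may vary with `ω`, it can absorb the interference of any further users. -/
theorem stmt_6_general {Ω : Type*} [MeasurableSpace Ω] {μ : Measure Ω} {lam₁ lam₂ : ℝ}
    {noise g₁ g₂ P₁ P₂ : Ω → ℝ} (hg : ∀ᵐ ω ∂μ, g₁ ω ≠ 0 ∧ g₂ ω ≠ 0)
    (hne : ∀ᵐ ω ∂μ, lam₁ * g₁ ω ≠ lam₂ * g₂ ω)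
    (hwf₁ : ∀ᵐ ω ∂μ, P₁ ω = max (lam₁ - noise ω / g₁ ω - P₂ ω * g₂ ω / g₁ ω) 0)
    (hwf₂ : ∀ᵐ ω ∂μ, P₂ ω = max (lam₂ - noise ω / g₂ ω - P₁ ω * g₁ ω / g₂ ω) 0) :
    μ {ω | 0 < P₁ ω ∧ 0 < P₂ ω} = 0 := by
  refine measure_eq_zero_iff_ae_notMem.2 ?_
  filter_upwards [hg, hne, hwf₁, hwf₂] with ω ⟨hg₁, hg₂⟩ hne h₁ h₂ ⟨hP₁, hP₂⟩
  exact hne (level_mul_gain_eq_level_mul_gain hg₁ hg₂ hP₁ hP₂ h₁ h₂)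

/-- Any mutual water-filling pair of power allocation policies (a Nash equilibrium
of the two-user water-filling game) is a time-sharing allocation: the two users
transmit simultaneously with probability zero. -/
theorem stmt_6 (μ : Measure (ℝ × ℝ)) [IsProbabilityMeasure μ] (hac : μ ≪ volume)
    (hpos : ∀ᵐ h ∂μ, 0 < h.1 ∧ 0 < h.2)
    (σ2 lam₁ lam₂ : ℝ) (hσ : 0 < σ2) (hlam₁ : 0 < lam₁) (hlam₂ : 0 < lam₂)
    (P₁ P₂ : ℝ × ℝ → ℝ) (hP₁m : Measurable P₁) (hP₂m : Measurable P₂)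
    (hwf₁ : ∀ᵐ h ∂μ, P₁ h = max (lam₁ - σ2 / h.1 - P₂ h * h.2 / h.1) 0)
    (hwf₂ : ∀ᵐ h ∂μ, P₂ h = max (lam₂ - σ2 / h.2 - P₁ h * h.1 / h.2) 0) :
    μ {h : ℝ × ℝ | 0 < P₁ h ∧ 0 < P₂ h} = 0 :=
  stmt_6_general (hpos.mono fun _ h => ⟨h.1.ne', h.2.ne'⟩)
    (hac.ae_le (ae_mul_fst_ne_mul_snd (.inl hlam₁.ne'))) hwf₁ hwf₂
end

section
/- Let σ² > 0 and b > 0. Then the function g(t) = (t − σ²/b)⁺ / (σ⁴ + σ²·(b·t − σ²)⁺) is nondecreasing in t ∈ ℝ. -/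
/-!
Put `x = t - σ² / b`, so that `b * t - σ² = b * x`. The positive part of `b * x` matters only where
`x⁺ ≠ 0`, and there it equals `b⁺ * x⁺`. The coefficient is therefore `u / (σ⁴ + σ² * b⁺ * u)` at
`u = x⁺`, and a Möbius map `u ↦ u / (a + c * u)` is nondecreasing for `u ≥ 0`, because the terms
`c * u * v` cancel when two of its values at `u` and `v` are cross-multiplied.
-/

section OrderedField

variable {K : Type*} [Field K] [LinearOrder K] [IsStrictOrderedRing K] {a c : K}

theorem monotoneOn_div_add_mul (ha : 0 < a) (hc : 0 ≤ c) :
    MonotoneOn (fun u : K => u / (a + c * u)) (Set.Ici 0) := by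
  intro u (hu : 0 ≤ u) v (hv : 0 ≤ v) huv
  have cross_mul_le : u * (a + c * v) ≤ v * (a + c * u) :=
    calc u * (a + c * v) = u * a + c * u * v := by ring
      _ ≤ v * a + c * u * v := by gcongr
      _ = v * (a + c * u) := by ring
  exact (div_le_div_iff₀ (by positivity) (by positivity)).2 cross_mul_le

theorem max_zero_div_add_mul_max_mul_zero (a b c x : K) :
    max x 0 / (a + c * max (b * x) 0) = max x 0 / (a + c * max b 0 * max x 0) := by
  obtain hx | hx := le_total x 0
  · rw [max_eq_right hx, zero_div, zero_div]
  · rw [max_eq_left hx, mul_assoc, max_mul_of_nonneg b 0 hx, zero_mul]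

theorem monotone_max_zero_div_add_mul_max_mul_zero (ha : 0 < a) (hc : 0 ≤ c) (b : K) :
    Monotone fun x : K => max x 0 / (a + c * max (b * x) 0) := by
  simp only [max_zero_div_add_mul_max_mul_zero]
  have hcb : 0 ≤ c * max b 0 := mul_nonneg hc (le_max_right b 0)
  exact fun x y hxy => monotoneOn_div_add_mul ha hcb
    (le_max_right x 0) (le_max_right y 0) (max_le_max_right 0 hxy)

theorem stmt_13_general {σ2 b : K} (hσ : 0 < σ2) (hb : b ≠ 0) :
    Monotone fun t : K => max (t - σ2 / b) 0 / (σ2 ^ 2 + σ2 * max (b * t - σ2) 0) := by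
  have factor (t : K) : b * t - σ2 = b * (t - σ2 / b) := by
    rw [mul_sub, mul_div_cancel₀ σ2 hb]
  simp only [factor]
  exact fun s t hst => monotone_max_zero_div_add_mul_max_mul_zero (pow_pos hσ 2) hσ.le b
    (sub_le_sub_right hst (σ2 / b))

end OrderedField

/-- The coefficient `g(t) = (t − σ²/b)⁺ / (σ⁴ + σ²(bt − σ²)⁺)` is nondecreasing. -/
theorem stmt_13 (σ2 b : ℝ) (hσ : 0 < σ2) (hb : 0 < b)
    (g : ℝ → ℝ)
    (hg : g = fun t => max (t - σ2 / b) 0 / (σ2 ^ 2 + σ2 * max (b * t - σ2) 0)) :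
    Monotone g := by
  rw [hg]
  exact stmt_13_general hσ hb.ne'
end

section
/- Let n ≥ 1, let A be a positive definite real symmetric n×n matrix, and let B and C be positive semidefinite real symmetric n×n matrices. Then det(A + B + C) · det(A) ≤ det(A + B) · det(A + C). -/
open Matrix

/-!
Write `C = Rᴴ * R`. For positive definite `A`, the matrix determinant lemma gives
`det (X + C) / det X = det (1 + R * X⁻¹ * Rᴴ)` for `X = A` and for `X = A + B`. The right-hand side
decreases as `X` grows in the Loewner order, because inversion is antitone and the determinant is
monotone. For singular `A` the left-hand side of the claimed inequality vanishes.
-/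

section LoewnerOrder

open scoped ComplexOrder MatrixOrder

variable {𝕜 n : Type*} [RCLike 𝕜] [Fintype n] [DecidableEq n] {A B C : Matrix n n 𝕜}

lemma one_le_det_of_one_le (hA : 1 ≤ A) : 1 ≤ A.det := by
  have hA_herm : A.IsHermitian := (zero_le_one.trans hA).posSemidef.isHermitian
  have one_le_eigenvalues (i : n) : 1 ≤ hA_herm.eigenvalues i :=
    (CFC.one_le_iff A hA_herm).mp hA _ (hA_herm.eigenvalues_mem_spectrum_real i)
  rw [hA_herm.det_eq_prod_eigenvalues]
  exact Finset.one_le_prod fun i _ => by exact_mod_cast one_le_eigenvalues i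

lemma det_le_det_of_le (hA : A.PosSemidef) (hAB : A ≤ B) : A.det ≤ B.det := by
  by_cases hA_det : A.det = 0
  · exact hA_det ▸ (hA.nonneg.trans hAB).posSemidef.det_nonneg
  obtain ⟨R, hR⟩ := CStarAlgebra.nonneg_iff_eq_star_mul_self.mp (sub_nonneg.mpr hAB)
  have one_le_factor : 1 ≤ (1 + R * A⁻¹ * star R).det :=
    one_le_det_of_one_le
      (le_add_of_nonneg_right (star_right_conjugate_nonneg hA.inv.nonneg R))
  calc A.det ≤ A.det * (1 + R * A⁻¹ * star R).det :=
        le_mul_of_one_le_right hA.det_nonneg one_le_factor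
    _ = (A + star R * R).det := (det_add_mul _ _ (Ne.isUnit hA_det)).symm
    _ = B.det := by rw [← hR, add_sub_cancel]

-- Both Schur complements of the block matrix `[B, 1; 1, A⁻¹]`, namely `B - A` and `A⁻¹ - B⁻¹`,
-- detect whether it is positive semidefinite.
lemma inv_le_inv_of_posDef_of_le (hA : A.PosDef) (hAB : A ≤ B) : B⁻¹ ≤ A⁻¹ := by
  have hB : B.PosDef := add_sub_cancel A B ▸ hA.add_posSemidef (Matrix.le_iff.mp hAB)
  let _ := hA.isUnit.invertible
  let _ := hA.inv.isUnit.invertible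
  let _ := hB.isUnit.invertible
  have block_posSemidef : (fromBlocks B 1 1ᴴ A⁻¹).PosSemidef :=
    (PosDef.fromBlocks₂₂ B 1 hA.inv).mpr (by simpa [← Matrix.le_iff] using hAB)
  simpa [← Matrix.le_iff] using (PosDef.fromBlocks₁₁ 1 A⁻¹ hB).mp block_posSemidef

theorem stmt_15_general (hA : A.PosSemidef) (hB : B.PosSemidef) (hC : C.PosSemidef) :
    (A + B + C).det * A.det ≤ (A + B).det * (A + C).det := by
  by_cases hA_det : A.det = 0
  · rw [hA_det, mul_zero]
    exact mul_nonneg (hA.add hB).det_nonneg (hA.add hC).det_nonneg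
  have hA_posDef : A.PosDef := hA.posDef_iff_det_ne_zero.mpr hA_det
  have hAB_posDef : (A + B).PosDef := hA_posDef.add_posSemidef hB
  obtain ⟨R, rfl⟩ := CStarAlgebra.nonneg_iff_eq_star_mul_self.mp hC.nonneg
  have inv_le : (A + B)⁻¹ ≤ A⁻¹ :=
    inv_le_inv_of_posDef_of_le hA_posDef (le_add_of_nonneg_right hB.nonneg)
  have factor_le : (1 + R * (A + B)⁻¹ * star R).det ≤ (1 + R * A⁻¹ * star R).det :=
    det_le_det_of_le (PosSemidef.one.add (hAB_posDef.inv.posSemidef.mul_mul_conjTranspose_same R))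
      (add_le_add_right (star_right_conjugate_le_conjugate inv_le R) 1)
  calc (A + B + star R * R).det * A.det
      = (A + B).det * (A.det * (1 + R * (A + B)⁻¹ * star R).det) := by
        rw [det_add_mul _ _ hAB_posDef.det_pos.ne'.isUnit]; ring
    _ ≤ (A + B).det * (A.det * (1 + R * A⁻¹ * star R).det) :=
        mul_le_mul_of_nonneg_left (mul_le_mul_of_nonneg_left factor_le hA.det_nonneg)
          hAB_posDef.det_pos.le
    _ = (A + B).det * (A + star R * R).det := by
        rw [det_add_mul _ _ hA_posDef.det_pos.ne'.isUnit]

end LoewnerOrder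

/-- Log-determinant submodularity: for `A` positive definite and `B`, `C` positive
semidefinite, `det(A + B + C) · det A ≤ det(A + B) · det(A + C)`. -/
theorem stmt_15 (n : ℕ) (hn : 1 ≤ n) (A B C : Matrix (Fin n) (Fin n) ℝ)
    (hA : A.PosDef) (hB : B.PosSemidef) (hC : C.PosSemidef) :
    (A + B + C).det * A.det ≤ (A + B).det * (A + C).det :=
  stmt_15_general hA.posSemidef hB hC
end
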